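/- Let K be a field of characteristic 0, let g ∈ K[x] be irreducible of even degree D = 2^{n−1} (n ≥ 2) with splitting field L, leading coefficient ℓ_g, and roots α_1,…,α_D ∈ L, and assume Gal(L/K) is a 2-group acting transitively on the roots. Let θ(x) = a(x−c)² + b with a ≠ 0. Then the extension L(√(a(α_1 − b)), …, √(a(α_D − b)))/L has degree 2^D if and only if ℓ_g·g(b) is not a square in L. -/

import Mathlib

open Polynomial

open IntermediateField in
theorem aux_mem {F E : Type*} [Field F] [Field E] [Algebra F E] {x : E} {d : F}
    (hx : x ^ 2 = algebraMap F E d) {y : E} (hy : y ∈ F⟮x⟯) :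
    ∃ u v : F, y = algebraMap F E u + algebraMap F E v * x := by
  have hint : IsIntegral F x := ⟨X ^ 2 - C d, monic_X_pow_sub_C d two_ne_zero, by simp [hx]⟩
  have hy' : y ∈ F⟮x⟯.toSubalgebra := hy
  rw [adjoin_simple_toSubalgebra_of_isAlgebraic hint.isAlgebraic] at hy'
  induction hy' using Algebra.adjoin_induction with
  | mem z hz => exact ⟨0, 1, by simpa using hz⟩
  | algebraMap r => exact ⟨r, 0, by simp⟩
  | add z w hz hw h1 h2 =>
    rw [← adjoin_simple_toSubalgebra_of_isAlgebraic hint.isAlgebraic] at hz hw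
    obtain ⟨u, v, rfl⟩ := h1 hz
    obtain ⟨u', v', rfl⟩ := h2 hw
    exact ⟨u + u', v + v', by simp only [map_add]; ring⟩
  | mul z w hz hw h1 h2 =>
    rw [← adjoin_simple_toSubalgebra_of_isAlgebraic hint.isAlgebraic] at hz hw
    obtain ⟨u, v, rfl⟩ := h1 hz
    obtain ⟨u', v', rfl⟩ := h2 hw
    exact ⟨u * u' + v * v' * d, u * v' + v * u', by simp only [map_add, map_mul, ← hx]; ring⟩

open IntermediateField in
theorem aux_rank_le {F E : Type*} [Field F] [Field E] [Algebra F E] {x : E} {d : F}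
    (hx : x ^ 2 = algebraMap F E d) : Module.finrank F F⟮x⟯ ≤ 2 := by
  have hm : (X ^ 2 - C d).Monic := monic_X_pow_sub_C d two_ne_zero
  have hint : IsIntegral F x := ⟨X ^ 2 - C d, hm, by simp [hx]⟩
  rw [adjoin.finrank hint]
  have := natDegree_le_of_dvd (minpoly.dvd F x (p := X ^ 2 - C d) (by simp [hx])) hm.ne_zero
  simpa using this

open IntermediateField in
theorem aux_rank {F E : Type*} [Field F] [Field E] [Algebra F E] {x : E} {d : F}
    (hx : x ^ 2 = algebraMap F E d) (hn : x ∉ (⊥ : IntermediateField F E)) :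
    Module.finrank F F⟮x⟯ = 2 := by
  have hm : (X ^ 2 - C d).Monic := monic_X_pow_sub_C d two_ne_zero
  have hint : IsIntegral F x := ⟨X ^ 2 - C d, hm, by simp [hx]⟩
  have h1 := aux_rank_le hx
  have h2 : Module.finrank F F⟮x⟯ ≠ 1 := by rwa [Ne, finrank_adjoin_simple_eq_one_iff]
  have := adjoin.finiteDimensional hint
  have h3 : 0 < Module.finrank F F⟮x⟯ := Module.finrank_pos
  omega

section
variable {L E ι : Type*} [Field L] [Field E] [Algebra L E] [DecidableEq ι]

open IntermediateField in
theorem aux_tower (β : ι → E) (i : ι) (S : Finset ι) :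
    restrictScalars L (adjoin (adjoin L (β '' S)) {β i}) = adjoin L (β '' (insert i S : Finset ι)) := by
  rw [adjoin_adjoin_left]
  congr 1
  simp [Set.image_insert_eq]

open IntermediateField in
theorem aux_tower_rank (β : ι → E) (i : ι) (S : Finset ι) :
    Module.finrank L (adjoin L (β '' (insert i S : Finset ι))) =
      Module.finrank L (adjoin L (β '' S)) *
      Module.finrank (adjoin L (β '' S)) (adjoin (adjoin L (β '' S)) {β i}) := by
  rw [← aux_tower, Module.finrank_mul_finrank]
  rfl

open IntermediateField in
theorem aux_le (β : ι → E) (d : ι → L) (hβ : ∀ i, β i ^ 2 = algebraMap L E (d i)) (S : Finset ι) :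
    Module.finrank L (adjoin L (β '' S)) ≤ 2 ^ S.card := by
  induction S using Finset.induction_on with
  | empty =>
    rw [Finset.coe_empty, Set.image_empty, adjoin_empty]
    simp
  | insert i S hi ih =>
    rw [aux_tower_rank, Finset.card_insert_of_notMem hi, pow_succ]
    exact Nat.mul_le_mul ih (aux_rank_le (F := adjoin L (β '' S)) (d := algebraMap L (adjoin L (β '' S)) (d i)) (hβ i))

open IntermediateField in
theorem aux_sq [CharZero L] (β : ι → E) (d : ι → L) (hβ : ∀ i, β i ^ 2 = algebraMap L E (d i))
    (S : Finset ι) : ∀ x : L, (∃ y ∈ adjoin L (β '' S), y ^ 2 = algebraMap L E x) →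
      ∃ T ⊆ S, IsSquare (x * ∏ i ∈ T, d i) := by
  have : CharZero E := charZero_of_injective_algebraMap (algebraMap L E).injective
  induction S using Finset.induction_on with
  | empty =>
    rintro x ⟨y, hy, hyx⟩
    simp only [Finset.coe_empty, Set.image_empty, adjoin_empty, mem_bot, Set.mem_range] at hy
    obtain ⟨z, rfl⟩ := hy
    rw [← map_pow] at hyx
    refine ⟨∅, by simp, z, ?_⟩
    rw [← (algebraMap L E).injective hyx]
    simp [sq]
  | insert i S hi ih =>
    rintro x ⟨y, hy, hyx⟩
    by_cases hb : β i ∈ adjoin L (β '' S)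
    · have hle : adjoin L (β '' (insert i S : Finset ι)) ≤ adjoin L (β '' S) := by
        rw [adjoin_le_iff, Finset.coe_insert, Set.image_insert_eq, Set.insert_subset_iff]
        exact ⟨hb, subset_adjoin _ _⟩
      obtain ⟨T, hT, h⟩ := ih x ⟨y, hle hy, hyx⟩
      exact ⟨T, hT.trans (Finset.subset_insert _ _), h⟩
    · rw [← aux_tower, mem_restrictScalars] at hy
      obtain ⟨u, v, rfl⟩ := aux_mem (F := adjoin L (β '' S)) (d := algebraMap L (adjoin L (β '' S)) (d i)) (hβ i) hy
      change ((u : E) + (v : E) * β i) ^ 2 = _ at hyx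
      have key : (2 * u * v : E) * β i = algebraMap L E x - u ^ 2 - v ^ 2 * algebraMap L E (d i) := by
        rw [← hyx, ← hβ]; ring
      have huv : (2 * u * v : E) = 0 := by
        by_contra hne
        apply hb
        have : β i = ((algebraMap L (adjoin L (β '' S)) x - u ^ 2 -
          v ^ 2 * algebraMap L (adjoin L (β '' S)) (d i)) / (2 * u * v) : adjoin L (β '' S)) := by
          push_cast
          change _ = _ / (2 * (u : E) * (v : E))
          rw [eq_div_iff hne, mul_comm, key]
        rw [this]
        exact SetLike.coe_mem _
      have huv' : (u : E) = 0 ∨ (v : E) = 0 := by simpa using huv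
      rcases huv' with h | h
      · rw [h] at hyx
        obtain ⟨T, hT, hs⟩ := ih (x * d i) ⟨v * algebraMap L E (d i),
          mul_mem v.2 (_root_.algebraMap_mem _ _), by
            rw [map_mul, ← hyx, ← hβ]; ring⟩
        refine ⟨insert i T, Finset.insert_subset_insert _ hT, ?_⟩
        rw [Finset.prod_insert (fun h => hi (hT h)), ← mul_assoc]
        exact hs
      · rw [h] at hyx
        obtain ⟨T, hT, hs⟩ := ih x ⟨u, u.2, by rw [← hyx]; ring⟩
        exact ⟨T, hT.trans (Finset.subset_insert _ _), hs⟩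

open IntermediateField in
theorem aux_indep [CharZero L] (β : ι → E) (d : ι → L)
    (hβ : ∀ i, β i ^ 2 = algebraMap L E (d i)) (S : Finset ι)
    (hS : ∀ T ⊆ S, T.Nonempty → ¬ IsSquare (∏ i ∈ T, d i)) :
    Module.finrank L (adjoin L (β '' S)) = 2 ^ S.card := by
  induction S using Finset.induction_on with
  | empty =>
    rw [Finset.coe_empty, Set.image_empty, adjoin_empty]
    simp
  | insert i S hi ih =>
    rw [aux_tower_rank, Finset.card_insert_of_notMem hi, pow_succ,
      ih (fun T hT => hS T (hT.trans (Finset.subset_insert _ _))),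
      aux_rank (F := adjoin L (β '' S)) (d := algebraMap L (adjoin L (β '' S)) (d i)) (hβ i)]
    intro hb
    rw [mem_bot] at hb
    obtain ⟨⟨z, hz⟩, hzb⟩ := hb
    change z = β i at hzb
    subst hzb
    obtain ⟨T, hT, hs⟩ := aux_sq β d hβ S (d i) ⟨β i, hz, hβ i⟩
    rw [← Finset.prod_insert (fun h => hi (hT h))] at hs
    exact hS _ (Finset.insert_subset_insert _ hT) (Finset.insert_nonempty _ _) hs

open IntermediateField in
theorem aux_dep (β : ι → E) (d : ι → L) (hd : ∀ i, d i ≠ 0)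
    (hβ : ∀ i, β i ^ 2 = algebraMap L E (d i)) (S : Finset ι) (hne : S.Nonempty)
    (hS : IsSquare (∏ i ∈ S, d i)) :
    Module.finrank L (adjoin L (β '' S)) ≠ 2 ^ S.card := by
  obtain ⟨i, hi⟩ := hne
  obtain ⟨T, hiT, rfl⟩ : ∃ T, i ∉ T ∧ insert i T = S :=
    ⟨S.erase i, by simp, Finset.insert_erase hi⟩
  have hb : β i ∈ adjoin L (β '' T) := by
    obtain ⟨s, hs⟩ := hS
    rw [Finset.prod_insert hiT] at hs
    have hβ0 : ∀ j, β j ≠ 0 := fun j h => by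
      have := hβ j
      rw [h] at this
      exact hd j ((map_eq_zero (algebraMap L E)).1 (by rw [← this]; simp))
    have hP : ∏ j ∈ T, β j ≠ 0 := Finset.prod_ne_zero_iff.2 fun j _ => hβ0 j
    have hPm : ∏ j ∈ T, β j ∈ adjoin L (β '' T) :=
      prod_mem fun j hj => subset_adjoin _ _ ⟨j, hj, rfl⟩
    have h2 : (β i * ∏ j ∈ T, β j) ^ 2 = (algebraMap L E s) ^ 2 := by
      rw [mul_pow, ← Finset.prod_pow, hβ, Finset.prod_congr rfl (fun j _ => hβ j), ← map_prod,
        ← map_mul, hs, map_mul, sq]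
    have hm : β i * ∏ j ∈ T, β j ∈ adjoin L (β '' T) := by
      rcases sq_eq_sq_iff_eq_or_eq_neg.1 h2 with h | h <;> rw [h]
      · exact _root_.algebraMap_mem _ _
      · exact neg_mem (_root_.algebraMap_mem _ _)
    have := div_mem hm hPm
    rwa [mul_div_cancel_right₀ _ hP] at this
  have hle : adjoin L (β '' (insert i T : Finset ι)) = adjoin L (β '' T) := by
    apply le_antisymm
    · rw [adjoin_le_iff, Finset.coe_insert, Set.image_insert_eq, Set.insert_subset_iff]
      exact ⟨hb, subset_adjoin _ _⟩
    · exact adjoin.mono _ _ _ (Set.image_mono (by simp))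
  rw [hle, Finset.card_insert_of_notMem hiT, pow_succ]
  have := aux_le β d hβ T
  have : 0 < 2 ^ T.card := by positivity
  omega
end

theorem aux_symmDiff {ι L : Type*} [Field L] [DecidableEq ι] (d : ι → L) (S T : Finset ι)
    (hd : ∀ i ∈ S ∪ T, d i ≠ 0) (hS : IsSquare (∏ i ∈ S, d i)) (hT : IsSquare (∏ i ∈ T, d i)) :
    IsSquare (∏ i ∈ symmDiff S T, d i) := by
  have h0 : ∏ i ∈ S ∩ T, d i ≠ 0 :=
    Finset.prod_ne_zero_iff.2 fun i hi => hd i (by simp at hi ⊢; tauto)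
  have : ∏ i ∈ symmDiff S T, d i =
      ((∏ i ∈ S, d i) * ∏ i ∈ T, d i) / ((∏ i ∈ S ∩ T, d i) * ∏ i ∈ S ∩ T, d i) := by
    rw [eq_div_iff (mul_ne_zero h0 h0), symmDiff_def, Finset.sup_eq_union, Finset.prod_union
      (disjoint_sdiff_sdiff), ← Finset.prod_sdiff (Finset.inter_subset_left : S ∩ T ⊆ S),
      ← Finset.prod_sdiff (Finset.inter_subset_right : S ∩ T ⊆ T)]
    simp only [Finset.sdiff_inter_self_left, Finset.sdiff_inter_self_right]
    ring
  rw [this]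
  exact (hS.mul hT).div ⟨_, rfl⟩

theorem aux_group {G L : Type*} [Field L] [Group G] [MulSemiringAction G L] [DecidableEq L]
    (hG : IsPGroup 2 G) (R : Finset L) (hR : ∀ (s : G), ∀ x ∈ R, s • x ∈ R)
    (htrans : ∀ x ∈ R, ∀ y ∈ R, ∃ s : G, s • x = y)
    (d : L → L) (hd : ∀ x ∈ R, d x ≠ 0) (hds : ∀ (s : G) x, d (s • x) = s • d x)
    (T₀ : Finset L) (hT₀ : T₀ ⊆ R) (hne : T₀.Nonempty) (hsq : IsSquare (∏ x ∈ T₀, d x)) :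
    IsSquare (∏ x ∈ R, d x) := by
  classical
  let V := {T : Finset L // T ⊆ R ∧ IsSquare (∏ x ∈ T, d x)}
  let _ : MulAction G V :=
    { smul := fun s T => ⟨T.1.image (s • ·), by
        intro x hx
        obtain ⟨y, hy, rfl⟩ := Finset.mem_image.1 hx
        exact hR s y (T.2.1 hy), by
        rw [Finset.prod_image (fun x _ y _ h => MulAction.injective s h)]
        simp only [hds]
        rw [← Finset.smul_prod']
        obtain ⟨r, hr⟩ := T.2.2
        exact ⟨s • r, by rw [hr, smul_mul']⟩⟩
      one_smul := fun T => Subtype.ext (by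
        change T.1.image ((1 : G) • ·) = T.1
        simp)
      mul_smul := fun s t T => Subtype.ext (by
        change T.1.image ((s * t) • ·) = (T.1.image (t • ·)).image (s • ·)
        rw [Finset.image_image]
        congr 1
        ext x
        simp [mul_smul]) }
  have smul_def : ∀ (s : G) (T : V), (s • T).1 = T.1.image (s • ·) := fun _ _ => rfl
  have hfin : Finite V := by
    apply Finite.of_injective (fun T : V => (⟨T.1, Finset.mem_powerset.2 T.2.1⟩ : R.powerset))
    intro a b h
    exact Subtype.ext (by simpa using h)
  have := Fintype.ofFinite V
  let f : Function.End V := fun T => ⟨symmDiff T.1 T₀,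
    (symmDiff_le_sup (a := T.1) (b := T₀)).trans (Finset.union_subset T.2.1 hT₀),
    aux_symmDiff d _ _ (fun i hi => hd i (Finset.union_subset T.2.1 hT₀ hi)) T.2.2 hsq⟩
  have hf : f ^ 2 ^ 1 = 1 := by
    funext T
    apply Subtype.ext
    change symmDiff (symmDiff T.1 T₀) T₀ = T.1
    simp
  have hcard : 2 ∣ Nat.card V := by
    have := Equiv.Perm.card_fixedPoints_modEq (p := 2) hf
    have h0 : Fintype.card (Function.fixedPoints f) = 0 := by
      rw [Fintype.card_eq_zero_iff]
      refine ⟨fun ⟨T, hT⟩ => ?_⟩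
      have h1 : symmDiff T.1 T₀ = T.1 := congrArg Subtype.val hT
      have h2 : T₀ = ⊥ := by simpa using h1
      exact hne.ne_empty h2
    rw [h0] at this
    rw [Nat.card_eq_fintype_card]
    exact (Nat.modEq_zero_iff_dvd).1 this
  let e : V := ⟨∅, by simp, by simp⟩
  have he : e ∈ MulAction.fixedPoints G V := fun s => Subtype.ext (by rw [smul_def]; simp [e])
  obtain ⟨T, hT, hTe⟩ := hG.exists_fixed_point_of_prime_dvd_card_of_fixed_point V hcard he
  have hTne : T.1.Nonempty := by
    rw [Finset.nonempty_iff_ne_empty]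
    intro h
    exact hTe (Subtype.ext h.symm)
  obtain ⟨x, hx⟩ := hTne
  have : T.1 = R := by
    apply Finset.Subset.antisymm T.2.1
    intro y hy
    obtain ⟨s, rfl⟩ := htrans x (T.2.1 hx) y hy
    rw [← hT s, smul_def]
    exact Finset.mem_image_of_mem _ hx
  rw [← this]
  exact T.2.2

theorem aux_sq_mul {L : Type*} [Field L] {c x : L} (hc : c ≠ 0) :
    IsSquare (c ^ 2 * x) ↔ IsSquare x := by
  constructor
  · intro h
    have := h.div (IsSquare.sq c)
    rwa [mul_div_cancel_left₀ _ (pow_ne_zero 2 hc)] at this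
  · exact fun h => (IsSquare.sq c).mul h

/-- Kummer-theoretic maximality criterion: let `g ∈ K[X]` be irreducible of even degree
`D = 2^{n−1}` (`n ≥ 2`) with splitting field `L`, whose Galois group is a 2-group acting
transitively on the roots `α_1, …, α_D`, and let `θ(x) = a(x−c)² + b` with `a ≠ 0`.
Then `[L(√(a(α_1−b)), …, √(a(α_D−b))) : L] = 2^D` iff `ℓ_g · g(b)` is not a square
in `L` (note `g(b) = (g∘θ)(c)`). -/
theorem stmt19 {K L : Type*} [Field K] [CharZero K] [Field L] [Algebra K L]
    (g : K[X]) (hg : Irreducible g) (n : ℕ) (hn : 2 ≤ n)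
    (hD : g.natDegree = 2 ^ (n - 1))
    [Polynomial.IsSplittingField K L g]
    (h2grp : IsPGroup 2 (L ≃ₐ[K] L))
    (α : Fin (2 ^ (n - 1)) → L) (hinj : Function.Injective α)
    (hroot : ∀ i, Polynomial.aeval (α i) g = 0)
    (htrans : ∀ i j, ∃ σ : L ≃ₐ[K] L, σ (α i) = α j)
    (a b c : K) (ha : a ≠ 0)
    (β : Fin (2 ^ (n - 1)) → AlgebraicClosure L)
    (hβ : ∀ i, β i ^ 2 =
      algebraMap L (AlgebraicClosure L) (algebraMap K L a * (α i - algebraMap K L b))) :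
    Module.finrank L (IntermediateField.adjoin L (Set.range β)) = 2 ^ (2 ^ (n - 1)) ↔
      ¬ IsSquare (algebraMap K L (g.leadingCoeff * g.eval b)) := by
  classical
  have : CharZero L := charZero_of_injective_algebraMap (algebraMap K L).injective
  obtain ⟨m, hm⟩ : ∃ m, n - 1 = m + 1 := ⟨n - 2, by omega⟩
  have hg0 : g ≠ 0 := hg.ne_zero
  have hgL0 : g.map (algebraMap K L) ≠ 0 := by
    rwa [Ne, Polynomial.map_eq_zero]
  have hdeg : 1 < g.natDegree := by
    rw [hD]; exact Nat.one_lt_two_pow (by omega)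
  have hgb : g.eval b ≠ 0 := by
    intro h
    have h1 : g.natDegree = 1 :=
      natDegree_eq_of_degree_eq_some (degree_eq_one_of_irreducible_of_root hg h)
    omega
  have hαb : ∀ i, α i - algebraMap K L b ≠ 0 := by
    intro i h
    have h1 := hroot i
    rw [sub_eq_zero.1 h, aeval_algebraMap_apply] at h1
    exact hgb (by simpa using h1)
  have haL : algebraMap K L a ≠ 0 := by simpa using ha
  -- roots
  have hroots : (g.map (algebraMap K L)).roots = Finset.univ.val.map α := by
    symm
    apply Multiset.eq_of_le_of_card_le
    · rw [Multiset.le_iff_subset (Finset.univ.nodup.map hinj)]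
      intro x hx
      obtain ⟨i, -, rfl⟩ := Multiset.mem_map.1 hx
      rw [mem_roots hgL0, IsRoot, eval_map_algebraMap]
      exact hroot i
    · refine (card_roots' _).trans ?_
      simp [hD]
  have hfac := C_leadingCoeff_mul_prod_multiset_X_sub_C (p := g.map (algebraMap K L))
    (by rw [hroots]; simp [hD])
  have heval : algebraMap K L (g.eval b) =
      algebraMap K L g.leadingCoeff * ∏ i, (algebraMap K L b - α i) := by
    have hp : (Multiset.map (fun a => X - C a) (Multiset.map α Finset.univ.val)).prod =
        ∏ i, (X - C (α i)) := by
      rw [Multiset.map_map]; rfl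
    have h1 := congrArg (eval (algebraMap K L b)) hfac
    rw [eval_map_algebraMap, aeval_algebraMap_apply, hroots, hp, eval_mul, eval_prod] at h1
    rw [← coe_aeval_eq_eval, ← h1]
    simp
  set d : L → L := fun x => algebraMap K L a * (x - algebraMap K L b) with hd
  have hprod : ∏ i, d (α i) =
      ((algebraMap K L a) ^ 2 ^ m) ^ 2 * ∏ i, (algebraMap K L b - α i) := by
    simp only [hd]
    rw [Finset.prod_mul_distrib, Finset.prod_const, Finset.card_univ, Fintype.card_fin, ← pow_mul,
      ← pow_succ, ← hm]
    congr 1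
    have : ∀ i, α i - algebraMap K L b = -1 * (algebraMap K L b - α i) := fun i => by ring
    simp only [this]
    rw [Finset.prod_mul_distrib, Finset.prod_const, Finset.card_univ, Fintype.card_fin,
      Even.neg_one_pow ((Nat.even_pow' (by omega)).2 even_two), one_mul]
  have hsq : IsSquare (algebraMap K L (g.leadingCoeff * g.eval b)) ↔ IsSquare (∏ i, d (α i)) := by
    rw [hprod, map_mul, heval, ← mul_assoc, ← sq, aux_sq_mul (by simpa using hg0),
      aux_sq_mul (pow_ne_zero _ haL)]
  rw [hsq, ← Set.image_univ, ← Finset.coe_univ]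
  have hcard : 2 ^ (n - 1) = (Finset.univ : Finset (Fin (2 ^ (n - 1)))).card := by simp
  have hd0 : ∀ i, d (α i) ≠ 0 := fun i => mul_ne_zero haL (hαb i)
  constructor
  · intro h hs
    refine aux_dep β (fun i => d (α i)) hd0 hβ Finset.univ ⟨⟨0, by positivity⟩, by simp⟩ hs ?_
    rw [h, ← hcard]
  · intro h
    have := aux_indep β (fun i => d (α i)) hβ Finset.univ ?_
    · rw [this, ← hcard]
    intro T _ hT hTs
    apply h
    have key := aux_group h2grp (Finset.univ.image α) ?_ ?_ d ?_ ?_ (T.image α)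
      (Finset.image_subset_image (Finset.subset_univ _)) (hT.image _) ?_
    · rwa [Finset.prod_image hinj.injOn] at key
    · intro s x hx
      have : ∀ y, y ∈ Finset.univ.image α ↔ y ∈ (g.map (algebraMap K L)).roots := by
        intro y; rw [hroots]; simp
      rw [this, mem_roots hgL0, IsRoot, eval_map_algebraMap] at hx ⊢
      change aeval (s x) g = 0
      rw [aeval_algHom_apply, hx, map_zero]
    · intro x hx y hy
      simp only [Finset.mem_image, Finset.mem_univ, true_and] at hx hy
      obtain ⟨i, rfl⟩ := hx
      obtain ⟨j, rfl⟩ := hy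
      exact htrans i j
    · intro x hx
      simp only [Finset.mem_image, Finset.mem_univ, true_and] at hx
      obtain ⟨i, rfl⟩ := hx
      exact hd0 i
    · intro s x
      simp [hd, AlgEquiv.smul_def]
    · rwa [Finset.prod_image hinj.injOn]
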